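/- arXiv:2012.10960 — 5 statements merged into one kernel-verified Lean document; each statement's English description precedes it below -/
import Mathlib

section
/- Let 1 < p ≤ q and let g : (0,∞) → (0,∞) satisfy condition (g₁) with exponents p, q. Then for every ε > 0 and all a, b > 0 one has the Young-type inequality g(a)·b ≤ ε·g(a)·a + g(b/ε)·b. -/
/-- Condition (g₁): for `0 < v ≤ w`, `(w/v)^(p-1) ≤ g w / g v ≤ (w/v)^(q-1)`. -/
def CondG1 (g : ℝ → ℝ) (p q : ℝ) : Prop :=
  ∀ v w : ℝ, 0 < v → v ≤ w →
    (w / v) ^ (p - 1) ≤ g w / g v ∧ g w / g v ≤ (w / v) ^ (q - 1)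

/-- Young-type inequality: `g(a)·b ≤ ε·g(a)·a + g(b/ε)·b`. -/
theorem young_type_inequality (p q : ℝ) (hp : 1 < p) (hpq : p ≤ q)
    (g : ℝ → ℝ) (hgpos : ∀ v : ℝ, 0 < v → 0 < g v)
    (hg1 : CondG1 g p q) :
    ∀ ε : ℝ, 0 < ε → ∀ a b : ℝ, 0 < a → 0 < b →
      g a * b ≤ ε * g a * a + g (b / ε) * b := by
  intro ε hε a b ha hb
  have hbε : 0 < b / ε := div_pos hb hε
  have hga := hgpos a ha
  have hgb := hgpos _ hbε
  rcases le_total b (ε * a) with h | h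
  · have h1 : g a * b ≤ g a * (ε * a) := mul_le_mul_of_nonneg_left h hga.le
    have h2 : 0 < g (b / ε) * b := mul_pos hgb hb
    linarith
  · have hle : a ≤ b / ε := by
      rw [le_div_iff₀ hε]
      linarith
    have h1 : (1 : ℝ) ≤ (b / ε / a) ^ (p - 1) :=
      Real.one_le_rpow ((one_le_div ha).2 hle) (by linarith)
    have h2 : g a ≤ g (b / ε) :=
      (one_le_div hga).1 (h1.trans (hg1 a (b / ε) ha hle).1)
    have h3 : g a * b ≤ g (b / ε) * b := mul_le_mul_of_nonneg_right h2 hb.le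
    have h4 : 0 < ε * g a * a := by positivity
    linarith
end

section
/- Let 1 < p < q, β ≥ 0, C > 0 and K > 0. Then there exist a constant γ > 0 and a radius r₀ ∈ (0,1) such that: for every r ∈ (0, r₀), every μ ≥ 1, and all c₁, c₂ ≥ 0 with |c₁ − c₂| ≤ C·r^(q−p)·μ, and for every v satisfying r ≤ v ≤ K·μ^(−1/(q−p))·(log(1/r))^(−β/(q−p)), one has g_{c₁}(v/r) ≤ γ·g_{c₂}(v/r). -/
/-- `g_c(v) = v^(p-1) + c·v^(q-1)·(1 + log(1+v))^β`. -/
noncomputable def gc (p q β c v : ℝ) : ℝ :=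
  v ^ (p - 1) + c * v ^ (q - 1) * (1 + Real.log (1 + v)) ^ β

theorem gc_nonlog_bound (p q β C K : ℝ)
    (hp : 1 < p) (hpq : p < q) (hβ : 0 ≤ β) (hC : 0 < C) (hK : 0 < K) :
    ∃ γ : ℝ, 0 < γ ∧ ∃ r₀ : ℝ, r₀ ∈ Set.Ioo (0 : ℝ) 1 ∧
      ∀ r : ℝ, r ∈ Set.Ioo (0 : ℝ) r₀ → ∀ μ : ℝ, 1 ≤ μ →
        ∀ c₁ c₂ : ℝ, 0 ≤ c₁ → 0 ≤ c₂ → |c₁ - c₂| ≤ C * r ^ (q - p) * μ →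
          ∀ v : ℝ, r ≤ v →
            v ≤ K * μ ^ (-(1 / (q - p))) * (Real.log (1 / r)) ^ (-(β / (q - p))) →
            gc p q β c₁ (v / r) ≤ γ * gc p q β c₂ (v / r) := by
  have ha : 0 < q - p := by linarith
  set a := q - p with ha_def
  set M := 2 + Real.log (1 + K) with hM
  have hlK : 0 ≤ Real.log (1 + K) := Real.log_nonneg (by linarith)
  have hM0 : 0 < M := by linarith
  have hKa : 0 < K ^ a := Real.rpow_pos_of_pos hK _
  have hMb : 0 < M ^ β := Real.rpow_pos_of_pos hM0 _
  have hD : 0 < C * K ^ a * M ^ β := by positivity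
  refine ⟨1 + C * K ^ a * M ^ β, by linarith, Real.exp (-1), ⟨Real.exp_pos _, by
    rw [Real.exp_lt_one_iff]; norm_num⟩, ?_⟩
  rintro r ⟨hr0, hr1⟩ μ hμ c₁ c₂ hc₁ hc₂ hc v hrv hv
  have hre : r < 1 := hr1.trans (by rw [Real.exp_lt_one_iff]; norm_num)
  have hL : 1 ≤ Real.log (1 / r) := by
    rw [one_div, Real.log_inv]
    have := (Real.log_lt_log hr0 hr1)
    rw [Real.log_exp] at this
    linarith
  set L := Real.log (1 / r) with hLdef
  have hL0 : 0 < L := by linarith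
  have hμ0 : 0 < μ := by linarith
  have hv0 : 0 < v := by linarith
  have hA : 0 < μ ^ (-(1 / a)) := Real.rpow_pos_of_pos hμ0 _
  have hB : 0 < L ^ (-(β / a)) := Real.rpow_pos_of_pos hL0 _
  have hA1 : μ ^ (-(1 / a)) ≤ 1 := Real.rpow_le_one_of_one_le_of_nonpos hμ (by
    have : 0 < 1 / a := by positivity
    linarith)
  have hB1 : L ^ (-(β / a)) ≤ 1 := Real.rpow_le_one_of_one_le_of_nonpos hL (by
    have : 0 ≤ β / a := by positivity
    linarith)
  have hvK : v ≤ K := by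
    have h1 : μ ^ (-(1 / a)) * L ^ (-(β / a)) ≤ 1 := mul_le_one₀ hA1 hB.le hB1
    nlinarith
  have hva : v ^ a ≤ K ^ a * μ⁻¹ * (L ^ β)⁻¹ := by
    have h := Real.rpow_le_rpow hv0.le hv ha.le
    rw [Real.mul_rpow (by positivity) hB.le, Real.mul_rpow hK.le hA.le,
      ← Real.rpow_mul hμ0.le, ← Real.rpow_mul hL0.le] at h
    have e1 : -(1 / a) * a = -1 := by field_simp
    have e2 : -(β / a) * a = -β := by field_simp
    rwa [e1, e2, Real.rpow_neg hL0.le, Real.rpow_neg_one] at h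
  have hw0 : 0 < v / r := by positivity
  have hrw : r ^ a * (v / r) ^ a = v ^ a := by
    rw [← Real.mul_rpow hr0.le hw0.le]
    congr 1
    field_simp
  have hl0 : 0 ≤ Real.log (1 + v / r) := Real.log_nonneg (by linarith)
  have hl : 1 + Real.log (1 + v / r) ≤ M * L := by
    have h1 : 1 + v / r ≤ (1 + K) * (1 / r) := by
      rw [mul_one_div, le_div_iff₀ hr0, add_mul, div_mul_cancel₀ _ hr0.ne']
      linarith
    have h2 := Real.log_le_log (by linarith) h1
    rw [Real.log_mul (by linarith) (by positivity)] at h2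
    nlinarith
  have hlb : (1 + Real.log (1 + v / r)) ^ β ≤ M ^ β * L ^ β := by
    rw [← Real.mul_rpow hM0.le hL0.le]
    exact Real.rpow_le_rpow (by linarith) hl hβ
  have hsplit : (v / r) ^ (q - 1) = (v / r) ^ a * (v / r) ^ (p - 1) := by
    rw [← Real.rpow_add hw0]
    congr 1
    rw [ha_def]; ring
  have hLb : 0 < L ^ β := Real.rpow_pos_of_pos hL0 _
  unfold gc
  set W := (v / r) ^ (p - 1) with hW
  set X := (1 + Real.log (1 + v / r)) ^ β with hX
  have hW0 : 0 < W := Real.rpow_pos_of_pos hw0 _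
  have hX0 : 0 < X := Real.rpow_pos_of_pos (by linarith) _
  have hwa : 0 < (v / r) ^ a := Real.rpow_pos_of_pos hw0 _
  rw [hsplit]
  have hkey : C * r ^ a * μ * ((v / r) ^ a * W) * X ≤ C * K ^ a * M ^ β * W := by
    calc C * r ^ a * μ * ((v / r) ^ a * W) * X
        = C * μ * W * ((r ^ a * (v / r) ^ a) * X) := by ring
      _ ≤ C * μ * W * ((K ^ a * μ⁻¹ * (L ^ β)⁻¹) * (M ^ β * L ^ β)) := by
          rw [hrw]; gcongr
      _ = C * K ^ a * M ^ β * W := by field_simp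
  have hcc : c₁ ≤ c₂ + C * r ^ a * μ := by
    have := (abs_le.mp hc).2
    linarith
  have h3 : c₁ * ((v / r) ^ a * W) * X ≤ (c₂ + C * r ^ a * μ) * ((v / r) ^ a * W) * X := by
    gcongr
  have h4 : 0 ≤ C * K ^ a * M ^ β * (c₂ * ((v / r) ^ a * W) * X) := by positivity
  linarith
end

section
/- For every δ₀ ∈ (0,1) and every C ≥ 1 there exists a constant γ > 0, depending only on δ₀ and C, with the following property: let ρ > 0 and let λ : ℝ → ℝ be a function with values in (0,1] on (0,2ρ), non-decreasing on (0,2ρ), and satisfying λ(r) ≤ (3/2)^(1−δ₀)·λ(r/2) for every r ∈ (0,2ρ). If ω : ℕ → ℝ is a non-negative sequence satisfying the recursion ω(i+1) ≤ (1 − λ(2^(−i)·ρ)/C)·ω(i) + C·2^(−i)·ρ/λ(2^(−i)·ρ) for every i ∈ ℕ, then for every j ∈ ℕ one has ω(j) ≤ ω(0)·exp(−(1/C)·∑_{i=0}^{j−1} λ(2^(−i)·ρ)) + γ·ρ/λ(ρ). -/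
theorem oscillation_iteration_estimate (δ₀ C : ℝ)
    (hδ₀ : δ₀ ∈ Set.Ioo (0 : ℝ) 1) (hC : 1 ≤ C) :
    ∃ γ : ℝ, 0 < γ ∧
      ∀ ρ : ℝ, 0 < ρ → ∀ lam : ℝ → ℝ,
        (∀ r : ℝ, r ∈ Set.Ioo 0 (2 * ρ) → lam r ∈ Set.Ioc (0 : ℝ) 1) →
        (∀ r s : ℝ, 0 < r → r ≤ s → s < 2 * ρ → lam r ≤ lam s) →
        (∀ r : ℝ, r ∈ Set.Ioo 0 (2 * ρ) → lam r ≤ (3 / 2 : ℝ) ^ (1 - δ₀) * lam (r / 2)) →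
        ∀ ω : ℕ → ℝ, (∀ i : ℕ, 0 ≤ ω i) →
          (∀ i : ℕ, ω (i + 1) ≤
            (1 - lam ((2 : ℝ) ^ (-(i : ℝ)) * ρ) / C) * ω i +
              C * ((2 : ℝ) ^ (-(i : ℝ)) * ρ) / lam ((2 : ℝ) ^ (-(i : ℝ)) * ρ)) →
          ∀ j : ℕ, ω j ≤
            ω 0 * Real.exp (-(1 / C) * ∑ i ∈ Finset.range j, lam ((2 : ℝ) ^ (-(i : ℝ)) * ρ)) +
              γ * ρ / lam ρ := by
  refine ⟨4 * C, by linarith, ?_⟩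
  intro ρ hρ lam hl _hm hd ω hω hrec
  have hC0 : 0 < C := by linarith
  have ht : ∀ i : ℕ, (2 : ℝ) ^ (-(i : ℝ)) = (1 / 2 : ℝ) ^ i := by
    intro i
    rw [Real.rpow_neg (by norm_num), Real.rpow_natCast, one_div, inv_pow]
  simp only [ht] at hrec ⊢
  have hmem : ∀ i : ℕ, (1 / 2 : ℝ) ^ i * ρ ∈ Set.Ioo 0 (2 * ρ) := by
    intro i
    have h1 : (1 / 2 : ℝ) ^ i ≤ 1 := pow_le_one₀ (by norm_num) (by norm_num)
    refine ⟨by positivity, ?_⟩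
    nlinarith
  have hq : (3 / 2 : ℝ) ^ (1 - δ₀) ≤ 3 / 2 := by
    calc (3 / 2 : ℝ) ^ (1 - δ₀) ≤ (3 / 2 : ℝ) ^ (1 : ℝ) :=
          Real.rpow_le_rpow_of_exponent_le (by norm_num) (by linarith [hδ₀.1])
      _ = 3 / 2 := Real.rpow_one _
  obtain ⟨a, ha⟩ : ∃ a : ℕ → ℝ, ∀ i, lam ((1 / 2 : ℝ) ^ i * ρ) = a i := ⟨_, fun _ => rfl⟩
  have ha0 : lam ρ = a 0 := by rw [← ha 0]; simp
  have hpos : ∀ i, 0 < a i := fun i => by rw [← ha i]; exact (hl _ (hmem i)).1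
  have hle : ∀ i, a i ≤ 1 := fun i => by rw [← ha i]; exact (hl _ (hmem i)).2
  have hstep : ∀ i, a i ≤ 3 / 2 * a (i + 1) := by
    intro i
    have h := hd _ (hmem i)
    have e : (1 / 2 : ℝ) ^ i * ρ / 2 = (1 / 2 : ℝ) ^ (i + 1) * ρ := by ring
    rw [e, ha, ha] at h
    exact h.trans (mul_le_mul_of_nonneg_right hq (hpos _).le)
  have hgrow : ∀ i, a 0 ≤ (3 / 2 : ℝ) ^ i * a i := by
    intro i
    induction i with
    | zero => simp
    | succ k ih =>
      have h : (3 / 2 : ℝ) ^ k * a k ≤ (3 / 2 : ℝ) ^ k * (3 / 2 * a (k + 1)) :=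
        mul_le_mul_of_nonneg_left (hstep k) (by positivity)
      calc a 0 ≤ _ := ih.trans h
        _ = _ := by ring
  simp only [ha, ha0] at hrec ⊢
  have herr : ∀ i, C * ((1 / 2 : ℝ) ^ i * ρ) / a i ≤ C * ρ / a 0 * (3 / 4 : ℝ) ^ i := by
    intro i
    rw [div_mul_eq_mul_div, div_le_div_iff₀ (hpos i) (hpos 0)]
    have e : (3 / 4 : ℝ) ^ i = (1 / 2) ^ i * (3 / 2) ^ i := by
      rw [← mul_pow]; norm_num
    rw [e]
    have h : C * ((1 / 2 : ℝ) ^ i * ρ) * a 0 ≤ C * ((1 / 2 : ℝ) ^ i * ρ) * ((3 / 2 : ℝ) ^ i * a i) :=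
      mul_le_mul_of_nonneg_left (hgrow i) (by positivity)
    linarith
  have hK : 0 ≤ C * ρ / a 0 := by have := hpos 0; positivity
  have main : ∀ j, ω j ≤ ω 0 * Real.exp (-(1 / C) * ∑ i ∈ Finset.range j, a i) +
      C * ρ / a 0 * (4 * (1 - (3 / 4 : ℝ) ^ j)) := by
    intro j
    induction j with
    | zero => simp
    | succ k ih =>
      have hx0 : 0 ≤ a k / C := div_nonneg (hpos k).le hC0.le
      have hx1 : 0 ≤ 1 - a k / C := by
        rw [sub_nonneg, div_le_one hC0]; exact (hle k).trans hC
      have hx2 : 1 - a k / C ≤ Real.exp (-(a k / C)) := by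
        linarith [Real.add_one_le_exp (-(a k / C))]
      have hE : Real.exp (-(1 / C) * ∑ i ∈ Finset.range (k + 1), a i) =
          Real.exp (-(a k / C)) * Real.exp (-(1 / C) * ∑ i ∈ Finset.range k, a i) := by
        rw [← Real.exp_add, Finset.sum_range_succ]; congr 1; ring
      rw [hE]
      have hA : 0 ≤ ω 0 * Real.exp (-(1 / C) * ∑ i ∈ Finset.range k, a i) :=
        mul_nonneg (hω 0) (Real.exp_pos _).le
      have hB : 0 ≤ C * ρ / a 0 * (4 * (1 - (3 / 4 : ℝ) ^ k)) := by
        have : (3 / 4 : ℝ) ^ k ≤ 1 := pow_le_one₀ (by norm_num) (by norm_num)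
        exact mul_nonneg hK (by linarith)
      have h1 := mul_le_mul_of_nonneg_left ih hx1
      have h2 := mul_le_mul_of_nonneg_right hx2 hA
      have h3 := mul_nonneg hx0 hB
      have h4 := hrec k
      have h5 := herr k
      rw [pow_succ]
      linarith
  intro j
  refine (main j).trans ?_
  have h : C * ρ / a 0 * (4 * (1 - (3 / 4 : ℝ) ^ j)) ≤ C * ρ / a 0 * 4 := by
    have : 0 < (3 / 4 : ℝ) ^ j := by positivity
    exact mul_le_mul_of_nonneg_left (by linarith) hK
  have e : 4 * C * ρ / a 0 = C * ρ / a 0 * 4 := by ring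
  rw [e]
  linarith
end

section
/- Let 1 < p ≤ q and let g : (0,∞) → (0,∞) satisfy condition (g₁) with exponents p, q. Then for every v > 0 the function g is Lebesgue integrable on the interval (0, v), and (v·g(v))/q ≤ ∫_{(0,v)} g(t) dt ≤ (v·g(v))/p. -/
open MeasureTheory

theorem aux_pow (r : ℝ) (hr : 1 < r) (c v : ℝ) (hv : 0 < v) :
    IntegrableOn (fun t => c * (t / v) ^ (r - 1)) (Set.Ioo 0 v) ∧
    ∫ t in Set.Ioo (0 : ℝ) v, c * (t / v) ^ (r - 1) = v * c / r := by
  have hr0 : 0 < r := by linarith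
  have hcont : Continuous (fun t : ℝ => c * (t / v) ^ (r - 1)) := by
    refine continuous_const.mul ?_
    exact (continuous_id.div_const v).rpow_const (fun x => Or.inr (by linarith))
  refine ⟨(hcont.integrableOn_Icc (a := 0) (b := v)).mono_set Set.Ioo_subset_Icc_self, ?_⟩
  rw [← integral_Ioc_eq_integral_Ioo, ← intervalIntegral.integral_of_le hv.le,
    intervalIntegral.integral_const_mul,
    intervalIntegral.integral_comp_div (fun t : ℝ => t ^ (r - 1)) hv.ne',
    integral_rpow (Or.inl (by linarith))]
  have h1 : r - 1 + 1 = r := by ring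
  rw [h1, zero_div, div_self hv.ne', Real.one_rpow, Real.zero_rpow hr0.ne', smul_eq_mul]
  ring

theorem aux_inv (r t v : ℝ) (ht : 0 < t) (hv : 0 < v) :
    (v / t) ^ r * (t / v) ^ r = 1 := by
  rw [← Real.mul_rpow (by positivity) (by positivity)]
  have : v / t * (t / v) = 1 := by field_simp
  rw [this, Real.one_rpow]

theorem primitive_of_g_comparable (p q : ℝ) (hp : 1 < p) (hpq : p ≤ q)
    (g : ℝ → ℝ) (hgpos : ∀ v : ℝ, 0 < v → 0 < g v) (hg1 : CondG1 g p q) :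
    ∀ v : ℝ, 0 < v →
      IntegrableOn g (Set.Ioo 0 v) ∧
      v * g v / q ≤ ∫ t in Set.Ioo (0 : ℝ) v, g t ∧
      (∫ t in Set.Ioo (0 : ℝ) v, g t) ≤ v * g v / p := by
  intro v hv
  have hq : 1 < q := lt_of_lt_of_le hp hpq
  obtain ⟨ip, ep⟩ := aux_pow p hp (g v) v hv
  obtain ⟨iq, eq⟩ := aux_pow q hq (g v) v hv
  have hup : ∀ t ∈ Set.Ioo 0 v, g t ≤ g v * (t / v) ^ (p - 1) := by
    intro t ht
    have h := (hg1 t v ht.1 ht.2.le).1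
    rw [le_div_iff₀ (hgpos t ht.1)] at h
    have hx : 0 ≤ (t / v) ^ (p - 1) := Real.rpow_nonneg (div_nonneg ht.1.le hv.le) _
    have h2 := mul_le_mul_of_nonneg_right h hx
    have h3 := aux_inv (p - 1) t v ht.1 hv
    calc g t = (v / t) ^ (p - 1) * (t / v) ^ (p - 1) * g t := by rw [h3, one_mul]
      _ = (v / t) ^ (p - 1) * g t * (t / v) ^ (p - 1) := by ring
      _ ≤ _ := h2
  have hlo : ∀ t ∈ Set.Ioo 0 v, g v * (t / v) ^ (q - 1) ≤ g t := by
    intro t ht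
    have h := (hg1 t v ht.1 ht.2.le).2
    rw [div_le_iff₀ (hgpos t ht.1)] at h
    have hx : 0 ≤ (t / v) ^ (q - 1) := Real.rpow_nonneg (div_nonneg ht.1.le hv.le) _
    have h2 := mul_le_mul_of_nonneg_right h hx
    have h3 := aux_inv (q - 1) t v ht.1 hv
    calc _ ≤ (v / t) ^ (q - 1) * g t * (t / v) ^ (q - 1) := h2
      _ = (v / t) ^ (q - 1) * (t / v) ^ (q - 1) * g t := by ring
      _ = g t := by rw [h3, one_mul]
  have hmono : MonotoneOn g (Set.Ioo 0 v) := by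
    intro a ha b hb hab
    have h := (hg1 a b ha.1 hab).1
    have h1 : (1 : ℝ) ≤ (b / a) ^ (p - 1) :=
      Real.one_le_rpow ((one_le_div ha.1).2 hab) (by linarith)
    exact (one_le_div (hgpos a ha.1)).1 (h1.trans h)
  have hmeas : AEMeasurable g (volume.restrict (Set.Ioo 0 v)) :=
    aemeasurable_restrict_of_monotoneOn measurableSet_Ioo hmono
  have hint : IntegrableOn g (Set.Ioo 0 v) := by
    refine Integrable.mono' ip hmeas.aestronglyMeasurable ?_
    refine (ae_restrict_iff' measurableSet_Ioo).2 (Filter.Eventually.of_forall fun t ht => ?_)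
    rw [Real.norm_of_nonneg (hgpos t ht.1).le]
    exact hup t ht
  refine ⟨hint, ?_, ?_⟩
  · rw [← eq]
    exact setIntegral_mono_on iq hint measurableSet_Ioo hlo
  · rw [← ep]
    exact setIntegral_mono_on hint ip measurableSet_Ioo hup
end

section
/- Let p > 1 and b ≥ 0. Then the function g_b satisfies the two-sided ratio bounds of condition (g₁) with exponents p and p+1: for all real numbers 0 < v ≤ w one has (w/v)^(p−1)·g_b(v) ≤ g_b(w) ≤ (w/v)^p·g_b(v). -/
/-- `g_b(v) = v^(p-1)·(1 + log(1 + b·v))`. -/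
noncomputable def gb (p b v : ℝ) : ℝ := v ^ (p - 1) * (1 + Real.log (1 + b * v))

theorem gb_satisfies_g1 (p b : ℝ) (hp : 1 < p) (hb : 0 ≤ b) :
    ∀ v w : ℝ, 0 < v → v ≤ w →
      (w / v) ^ (p - 1) * gb p b v ≤ gb p b w ∧
      gb p b w ≤ (w / v) ^ p * gb p b v := by
  intro v w hv hvw
  have hw : 0 < w := lt_of_lt_of_le hv hvw
  obtain ⟨t, rfl⟩ : ∃ t, w = t * v := ⟨w / v, by field_simp⟩
  have ht : 1 ≤ t := by
    by_contra h
    push Not at h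
    nlinarith
  have ht0 : 0 < t := by linarith
  have hdiv : t * v / v = t := by field_simp
  have hbv : 0 ≤ b * v := by positivity
  have hL : 0 ≤ Real.log (1 + b * v) := Real.log_nonneg (by linarith)
  have hmono : Real.log (1 + b * v) ≤ Real.log (1 + b * (t * v)) :=
    Real.log_le_log (by linarith) (by nlinarith)
  have hup : Real.log (1 + b * (t * v)) ≤ Real.log t + Real.log (1 + b * v) := by
    rw [← Real.log_mul (by positivity) (by positivity)]
    exact Real.log_le_log (by positivity) (by nlinarith)
  have hlt : Real.log t ≤ t - 1 := Real.log_le_sub_one_of_pos ht0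
  have hpow : t ^ p = t ^ (p - 1) * t := by
    rw [Real.rpow_sub_one ht0.ne']
    field_simp
  have hc : 0 ≤ t ^ (p - 1) * v ^ (p - 1) := by positivity
  unfold gb
  rw [hdiv, Real.mul_rpow ht0.le hv.le, hpow]
  constructor
  · rw [← mul_assoc]
    exact mul_le_mul_of_nonneg_left (by linarith) hc
  · have h : 1 + Real.log (1 + b * (t * v)) ≤ t * (1 + Real.log (1 + b * v)) := by
      nlinarith
    calc _ ≤ t ^ (p - 1) * v ^ (p - 1) * (t * (1 + Real.log (1 + b * v))) :=
          mul_le_mul_of_nonneg_left h hc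
      _ = _ := by ring
end
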